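/- Let X be a complex Banach space, B its open unit ball, and F : B → X holomorphic and pseudo-dissipative with constants θ, a, b, ε. Then F has unit radius of boundedness: for every 0 < r < 1, sup_{‖z‖ ≤ r} ‖F(z)‖ < ∞; explicitly, ‖F(z) − F(0)‖ ≤ ‖z‖(|a| + e·V(e^{iθ}A − a·id)) + 4‖z‖²‖F(0)‖ + 8‖z‖²·((1 − ‖z‖ln 2)/(1−‖z‖)²)·(a − m(e^{iθ}A)), where A = DF(0). -/

import Mathlib

open Complex Metric

/-!
Passing to `G = exp (iθ) • F`, we may take `θ = 0`. For a unit vector `v` with supporting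
functional `vs`, put `g ζ = vs (G (ζ • v))`. Pseudo-dissipativity bounds `Re (conj ζ * g ζ)` near
the unit circle, where it agrees with the real part of the holomorphic function `(g ζ - g 0) / ζ +
conj (g 0) * ζ`. Carathéodory's inequality for a function whose real part is bounded above
therefore controls the Taylor coefficients of `g`, that is, the numerical range of each homogeneous
Taylor term of `G` of degree at least two.

A bound `K` on the numerical range of a homogeneous `P` of degree `n + 1` becomes a bound on its
norm by Harris' argument: the Euler iterates of `y' = ζ P y` started on the unit sphere grow at most
like the solution of `y' = K y ^ (n + 1)`, and Cauchy's estimate for the derivative in `ζ` at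
`0`, which is a multiple of `P`, gives `‖P‖ ≤ (n + 1) ^ (1 + 1 / n) * K`, and `‖P‖ ≤ e * K` for
`n = 0`. These constants are at most `4 * (1 + (1 - log 2) * (n - 1))` for `n ≥ 1`; summing the
Taylor series against this linear sequence produces the factor `(1 - ‖z‖ log 2) / (1 - ‖z‖) ^ 2`.
-/

open scoped Nat Topology ComplexConjugate
open Filter Set

section Holomorphic

variable {E F : Type*} [NormedAddCommGroup E] [NormedSpace ℂ E]
  [NormedAddCommGroup F] [NormedSpace ℂ F]

theorem uniformCauchySeqOn_fderiv {ι : Type*} {l : Filter ι} {f : ι → E → F} {c : E} {r : ℝ}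
    (hr : 0 < r) (hf : ∀ᶠ i in l, DifferentiableOn ℂ (f i) (ball c (2 * r)))
    (h : UniformCauchySeqOn f l (ball c (2 * r))) :
    UniformCauchySeqOn (fun i ↦ fderiv ℂ (f i)) l (ball c r) := by
  intro u hu
  obtain ⟨η, hη, hηu⟩ := Metric.mem_uniformity_dist.1 hu
  filter_upwards [h _ (Metric.dist_mem_uniformity (show 0 < η * r / 4 by positivity)),
    hf.prod_mk hf] with ij hij hdiffOn x hx
  have hxr : ball x r ⊆ ball c (2 * r) :=
    ball_subset_ball' (by linarith [mem_ball.1 hx])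
  have hdiff {g : E → F} (hg : DifferentiableOn ℂ g (ball c (2 * r))) {y : E} (hy : y ∈ ball x r) :
      DifferentiableAt ℂ g y := hg.differentiableAt (isOpen_ball.mem_nhds (hxr hy))
  have hbound : ‖fderiv ℂ (f ij.1 - f ij.2) x‖ ≤ η * r / 2 / r := by
    refine norm_fderiv_le_div_of_mapsTo_ball (fun y hy ↦
      ((hdiff hdiffOn.1 hy).sub (hdiff hdiffOn.2 hy)).differentiableWithinAt) (fun y hy ↦ ?_) hr
    have hy' := hij y (hxr hy)
    have hx' := hij x (hxr (mem_ball_self hr))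
    simp only [dist_eq_norm] at hy' hx'
    rw [mem_closedBall, dist_eq_norm]
    exact (norm_sub_le _ _).trans (by simp only [Pi.sub_apply]; linarith)
  have hself := mem_ball_self (x := x) hr
  apply hηu
  rw [dist_eq_norm, ← fderiv_sub (hdiff hdiffOn.1 hself) (hdiff hdiffOn.2 hself)]
  refine hbound.trans_lt ?_
  rw [div_div, div_lt_iff₀ (by positivity)]
  nlinarith [mul_pos hη hr]

theorem differentiableOn_of_tendstoUniformlyOn [CompleteSpace F] {ι : Type*} {l : Filter ι}
    [l.NeBot] {f : ι → E → F} {g : E → F} {s : Set E} (hs : IsOpen s)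
    (hf : ∀ᶠ i in l, DifferentiableOn ℂ (f i) s) (h : TendstoUniformlyOn f g l s) :
    DifferentiableOn ℂ g s := by
  intro x hx
  obtain ⟨R, hR, hRs⟩ := Metric.isOpen_iff.1 hs x hx
  obtain ⟨r, hr, rfl⟩ : ∃ r, 0 < r ∧ R = 2 * r := ⟨R / 2, by positivity, by ring⟩
  have hrs : ball x r ⊆ s := (ball_subset_ball (by linarith)).trans hRs
  have hcauchy := uniformCauchySeqOn_fderiv hr (hf.mono fun _ hi ↦ hi.mono hRs)
    (h.mono hRs).uniformCauchySeqOn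
  choose! g' hg' using fun y hy ↦ cauchy_map_iff_exists_tendsto.1 (hcauchy.cauchy_map (x := y) hy)
  have hball : ball x r ∈ 𝓝 x := ball_mem_nhds x hr
  have hderiv : ∀ᶠ p : ι × E in l ×ˢ 𝓝 x, HasFDerivAt (f p.1) (fderiv ℂ (f p.1) p.2) p.2 := by
    filter_upwards [hf.prod_mk (hball : ∀ᶠ y in 𝓝 x, y ∈ ball x r)] with p hp
    exact (hp.1.differentiableAt (hs.mem_nhds (hrs hp.2))).hasFDerivAt
  exact (hasFDerivAt_of_tendstoUniformlyOnFilter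
    ((hcauchy.tendstoUniformlyOn_of_tendsto hg').tendstoUniformlyOnFilter.mono_right
      (le_principal_iff.2 hball))
    hderiv (mem_of_superset hball fun y hy ↦ h.tendsto_at (hrs hy))).differentiableAt
      |>.differentiableWithinAt

theorem norm_sub_sub_fderiv_apply_le {f : E → F} {c w : E} {R M : ℝ}
    (hf : DifferentiableOn ℂ f (ball c R))
    (hM : MapsTo f (ball c R) (closedBall (f c) M)) (hw : w ∈ ball c R) :
    ‖f w - f c - fderiv ℂ f c (w - c)‖ ≤ 2 * M * (‖w - c‖ / R) ^ 2 := by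
  have hR : 0 < R := pos_of_mem_ball hw
  have hfc : HasFDerivAt f (fderiv ℂ f c) c :=
    (hf.differentiableAt (ball_mem_nhds c hR)).hasFDerivAt
  let g : E → F := fun w ↦ f w - f c - fderiv ℂ f c (w - c)
  have hgc : g c = 0 := by simp [g]
  have hg : DifferentiableOn ℂ g (ball c R) := by fun_prop
  have hmaps : MapsTo g (ball c R) (closedBall (g c) (2 * M)) := fun w hw ↦ by
    have hMw : ‖f w - f c‖ ≤ M := mem_closedBall_iff_norm.1 (hM hw)
    have hlin : ‖fderiv ℂ f c (w - c)‖ ≤ M := by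
      refine ((fderiv ℂ f c).le_opNorm _).trans ?_
      calc ‖fderiv ℂ f c‖ * ‖w - c‖ ≤ M / R * R := by
            have := norm_fderiv_le_div_of_mapsTo_ball hf hM hR
            gcongr
            · exact (norm_nonneg _).trans this
            · exact (mem_ball_iff_norm.1 hw).le
        _ = M := div_mul_cancel₀ M hR.ne'
    rw [hgc, mem_closedBall_zero_iff]
    exact (norm_sub_le _ _).trans (by linarith)
  have hlittle : (fun w ↦ g w - g c) =o[𝓝 c] fun w ↦ ‖w - c‖ ^ 1 := by
    simpa only [hgc, sub_zero, pow_one] using hfc.isLittleO.norm_right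
  simpa only [hgc, sub_zero, dist_eq_norm] using
    dist_le_mul_div_pow_of_mapsTo_ball_of_isLittleO hg hmaps hlittle hw

theorem tendstoUniformlyOn_difference_quotient {f : E → F} {c : E} {r M : ℝ} (hr : 0 < r)
    (hf : DifferentiableOn ℂ f (ball c (2 * r)))
    (hM : MapsTo f (ball c (2 * r)) (closedBall (f c) M)) (v : E) :
    TendstoUniformlyOn (fun (t : ℂ) x ↦ t⁻¹ • (f (x + t • v) - f x)) (fun x ↦ fderiv ℂ f x v)
      (𝓝[≠] 0) (ball c r) := by
  rw [Metric.tendstoUniformlyOn_iff]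
  intro η hη
  have hsmall : ∀ᶠ t : ℂ in 𝓝[≠] 0, ‖t • v‖ < r := nhdsWithin_le_nhds <|
    ContinuousAt.eventually_lt (by fun_prop) continuousAt_const (by simpa using hr)
  have hrate : ∀ᶠ t : ℂ in 𝓝[≠] 0, 4 * M * ‖t‖ * (‖v‖ / r) ^ 2 < η := nhdsWithin_le_nhds <|
    ContinuousAt.eventually_lt (by fun_prop) continuousAt_const (by simpa using hη)
  filter_upwards [hsmall, hrate, self_mem_nhdsWithin] with t htr htη ht x hx
  have ht0 : t ≠ 0 := ht
  have hsub : ball x r ⊆ ball c (2 * r) :=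
    ball_subset_ball' (by linarith [mem_ball.1 hx])
  have hmaps : MapsTo f (ball x r) (closedBall (f x) (2 * M)) := fun y hy ↦ by
    have hyM := hM (hsub hy)
    have hxM := hM (hsub (mem_ball_self hr))
    rw [mem_closedBall] at *
    exact (dist_triangle_right _ _ (f c)).trans (by linarith)
  have hrem := norm_sub_sub_fderiv_apply_le (w := x + t • v) (hf.mono hsub) hmaps
    (by rwa [mem_ball_iff_norm, add_sub_cancel_left])
  rw [add_sub_cancel_left, map_smul] at hrem
  rw [dist_comm, dist_eq_norm]
  calc ‖t⁻¹ • (f (x + t • v) - f x) - fderiv ℂ f x v‖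
      = ‖t‖⁻¹ * ‖f (x + t • v) - f x - t • fderiv ℂ f x v‖ := by
        rw [← norm_inv, ← norm_smul, smul_sub t⁻¹ _ (t • _), inv_smul_smul₀ ht0]
    _ ≤ ‖t‖⁻¹ * (2 * (2 * M) * (‖t • v‖ / r) ^ 2) := by gcongr
    _ = 4 * M * ‖t‖ * (‖v‖ / r) ^ 2 := by
        have := norm_ne_zero_iff.2 ht0
        rw [norm_smul]
        field_simp
        ring
    _ < η := htη

theorem differentiableOn_fderiv_apply [CompleteSpace F] {f : E → F} {s : Set E} (hs : IsOpen s)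
    (hf : DifferentiableOn ℂ f s) (v : E) : DifferentiableOn ℂ (fun x ↦ fderiv ℂ f x v) s := by
  intro c hc
  have hcont : ContinuousAt f c := (hf.differentiableAt (hs.mem_nhds hc)).continuousAt
  obtain ⟨R, hR, hball⟩ := Metric.mem_nhds_iff.1
    (inter_mem (hs.mem_nhds hc) (hcont (closedBall_mem_nhds (f c) one_pos)))
  obtain ⟨r, hr, rfl⟩ : ∃ r, 0 < r ∧ R = 2 * r := ⟨R / 2, by positivity, by ring⟩
  have hlim := tendstoUniformlyOn_difference_quotient hr (hf.mono (hball.trans inter_subset_left))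
    (fun x hx ↦ (hball hx).2) v
  have hquot : ∀ᶠ t : ℂ in 𝓝[≠] 0,
      DifferentiableOn ℂ (fun x ↦ t⁻¹ • (f (x + t • v) - f x)) (ball c r) := by
    have hsmall : ∀ᶠ t : ℂ in 𝓝[≠] 0, ‖t • v‖ < r := nhdsWithin_le_nhds <|
      ContinuousAt.eventually_lt (by fun_prop) continuousAt_const (by simpa using hr)
    filter_upwards [hsmall] with t ht
    have hshift : DifferentiableOn ℂ (fun x ↦ f (x + t • v)) (ball c r) :=
      hf.comp (by fun_prop) fun x hx ↦ (hball (by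
        rw [mem_ball_iff_norm, add_sub_right_comm]
        linarith [norm_add_le (x - c) (t • v), mem_ball_iff_norm.1 hx])).1
    exact (hshift.sub (hf.mono fun x hx ↦
      (hball (ball_subset_ball (by linarith) hx)).1)).const_smul t⁻¹
  exact ((differentiableOn_of_tendstoUniformlyOn isOpen_ball hquot hlim).differentiableAt
    (ball_mem_nhds c hr)).differentiableWithinAt

theorem differentiableOn_iteratedDeriv_slice [CompleteSpace F] {f : ℂ × E → F} {s : Set (ℂ × E)}
    (hs : IsOpen s) (hf : DifferentiableOn ℂ f s) (n : ℕ) :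
    DifferentiableOn ℂ (fun p : ℂ × E ↦ iteratedDeriv n (fun ζ ↦ f (ζ, p.2)) p.1) s := by
  induction n with
  | zero => simpa only [iteratedDeriv_zero] using hf
  | succ n ih =>
    refine (differentiableOn_fderiv_apply hs ih (1, 0)).congr fun p hp ↦ ?_
    have hslice : HasDerivAt (fun ζ : ℂ ↦ (ζ, p.2)) (1, 0) p.1 :=
      (hasDerivAt_id p.1).prodMk (hasDerivAt_const p.1 p.2)
    have hp' := (ih.differentiableAt (hs.mem_nhds hp)).hasFDerivAt
    rw [iteratedDeriv_succ]
    exact (hp'.comp_hasDerivAt p.1 hslice).deriv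

end Holomorphic

section TaylorTerm

variable {E F : Type*} [NormedAddCommGroup E] [NormedSpace ℂ E]
  [NormedAddCommGroup F] [NormedSpace ℂ F]

theorem inv_factorial_smul_iteratedDeriv_of_hasFPowerSeriesAt [CompleteSpace F] {f : ℂ → F}
    {p : FormalMultilinearSeries ℂ ℂ F} (h : HasFPowerSeriesAt f p 0) (n : ℕ) :
    (n ! : ℂ)⁻¹ • iteratedDeriv n f 0 = p.coeff n := by
  obtain ⟨r, hr⟩ := h
  have hfact : (n ! : ℂ) ≠ 0 := by exact_mod_cast n.factorial_ne_zero
  rw [inv_smul_eq_iff₀ hfact, iteratedDeriv_eq_iteratedFDeriv, Nat.cast_smul_eq_nsmul]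
  exact (hr.factorial_smul 1 n).symm

theorem inv_factorial_smul_iteratedDeriv_of_hasSum [CompleteSpace F] {f : ℂ → F} {p : ℕ → F}
    (h : ∀ᶠ ζ in 𝓝 0, HasSum (fun n ↦ ζ ^ n • p n) (f ζ)) (n : ℕ) :
    (n ! : ℂ)⁻¹ • iteratedDeriv n f 0 = p n := by
  let s : FormalMultilinearSeries ℂ ℂ F := fun k ↦ ContinuousMultilinearMap.mkPiRing ℂ (Fin k) (p k)
  have hs (k : ℕ) : s.coeff k = p k := by simp [s, FormalMultilinearSeries.coeff]
  have hf : HasFPowerSeriesAt f s 0 :=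
    hasFPowerSeriesAt_iff.2 (by simpa only [hs, zero_add] using h)
  exact (inv_factorial_smul_iteratedDeriv_of_hasFPowerSeriesAt hf n).trans (hs n)

theorem inv_factorial_smul_iteratedDeriv_dslope [CompleteSpace F] {f : ℂ → F}
    (hf : AnalyticAt ℂ f 0) (n : ℕ) :
    (n ! : ℂ)⁻¹ • iteratedDeriv n (dslope f 0) 0 =
      ((n + 1)! : ℂ)⁻¹ • iteratedDeriv (n + 1) f 0 := by
  obtain ⟨p, hp⟩ := hf
  rw [inv_factorial_smul_iteratedDeriv_of_hasFPowerSeriesAt hp,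
    inv_factorial_smul_iteratedDeriv_of_hasFPowerSeriesAt hp.has_fpower_series_dslope_fslope,
    FormalMultilinearSeries.coeff_fslope]

/-- The homogeneous Taylor term of degree `n` of `G` at the origin, as a function of the
displacement `x`; it is read off the restriction of `G` to the complex line through `x`. -/
noncomputable def taylorTerm (G : E → F) (n : ℕ) (x : E) : F :=
  (n ! : ℂ)⁻¹ • iteratedDeriv n (fun ζ : ℂ ↦ G (ζ • x)) 0

variable {G : E → F} {R : ℝ}

theorem eventually_norm_smul_lt (hR : 0 < R) (x : E) : ∀ᶠ ζ : ℂ in 𝓝 0, ‖ζ • x‖ < R :=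
  ContinuousAt.eventually_lt (by fun_prop) continuousAt_const (by simpa using hR)

theorem hasSum_pow_smul_taylorTerm [CompleteSpace F] (hG : DifferentiableOn ℂ G (ball 0 R))
    {x : E} {ζ : ℂ} (hζ : ‖ζ • x‖ < R) :
    HasSum (fun n ↦ ζ ^ n • taylorTerm G n x) (G (ζ • x)) := by
  obtain ⟨ρ, hρ, hρx⟩ : ∃ ρ, ‖ζ‖ < ρ ∧ ρ * ‖x‖ < R := by
    have hlt : ∀ᶠ ρ in 𝓝[>] ‖ζ‖, ρ * ‖x‖ < R := nhdsWithin_le_nhds <|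
      ContinuousAt.eventually_lt (by fun_prop) continuousAt_const (by rwa [← norm_smul])
    exact (eventually_mem_nhdsWithin.and hlt).exists
  have hslice : DifferentiableOn ℂ (fun ζ : ℂ ↦ G (ζ • x)) (ball 0 ρ) :=
    hG.comp (by fun_prop) fun w hw ↦ by
      rw [mem_ball_zero_iff] at hw ⊢
      rw [norm_smul]
      exact (mul_le_mul_of_nonneg_right hw.le (norm_nonneg x)).trans_lt hρx
  simpa only [taylorTerm, sub_zero, smul_comm (ζ ^ _)] using
    hasSum_taylorSeries_on_ball hslice (mem_ball_zero_iff.2 hρ)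

theorem hasSum_taylorTerm [CompleteSpace F] (hG : DifferentiableOn ℂ G (ball 0 R)) {x : E}
    (hx : x ∈ ball 0 R) : HasSum (fun n ↦ taylorTerm G n x) (G x) := by
  simpa using hasSum_pow_smul_taylorTerm hG (ζ := 1) (by simpa using hx)

theorem taylorTerm_smul [CompleteSpace F] (hR : 0 < R) (hG : DifferentiableOn ℂ G (ball 0 R))
    (n : ℕ) (c : ℂ) (x : E) : taylorTerm G n (c • x) = c ^ n • taylorTerm G n x := by
  refine inv_factorial_smul_iteratedDeriv_of_hasSum
    (p := fun n ↦ c ^ n • taylorTerm G n x) ?_ n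
  filter_upwards [eventually_norm_smul_lt hR (c • x)] with ζ hζ
  rw [smul_smul] at hζ ⊢
  simpa only [mul_pow, mul_smul] using hasSum_pow_smul_taylorTerm hG hζ

theorem map_taylorTerm [CompleteSpace F] {F' : Type*} [NormedAddCommGroup F'] [NormedSpace ℂ F']
    [CompleteSpace F'] (hR : 0 < R) (hG : DifferentiableOn ℂ G (ball 0 R)) (ℓ : F →L[ℂ] F')
    (n : ℕ) (x : E) : ℓ (taylorTerm G n x) = taylorTerm (fun y ↦ ℓ (G y)) n x := by
  refine (inv_factorial_smul_iteratedDeriv_of_hasSum (p := fun n ↦ ℓ (taylorTerm G n x))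
    ?_ n).symm
  filter_upwards [eventually_norm_smul_lt hR x] with ζ hζ
  simpa only [map_smul] using ℓ.hasSum (hasSum_pow_smul_taylorTerm hG hζ)

theorem taylorTerm_zero (x : E) : taylorTerm G 0 x = G 0 := by simp [taylorTerm]

theorem taylorTerm_one (hG : DifferentiableAt ℂ G 0) (x : E) :
    taylorTerm G 1 x = fderiv ℂ G 0 x := by
  have hGx : HasFDerivAt G (fderiv ℂ G 0) ((0 : ℂ) • x) := by
    rw [zero_smul]
    exact hG.hasFDerivAt
  have hline : HasDerivAt (fun ζ : ℂ ↦ ζ • x) ((1 : ℂ) • x) 0 := (hasDerivAt_id _).smul_const x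
  simpa [taylorTerm, iteratedDeriv_one, Function.comp_def] using
    (hGx.comp_hasDerivAt (0 : ℂ) hline).deriv

theorem differentiable_taylorTerm [CompleteSpace F] (hR : 0 < R)
    (hG : DifferentiableOn ℂ G (ball 0 R)) (n : ℕ) : Differentiable ℂ (taylorTerm G n) := by
  have hopen : IsOpen {p : ℂ × E | p.1 • p.2 ∈ ball 0 R} :=
    isOpen_ball.preimage (continuous_fst.smul continuous_snd)
  have hdiff := differentiableOn_iteratedDeriv_slice hopen (f := fun p ↦ G (p.1 • p.2))
    (hG.comp (differentiable_fst.smul differentiable_snd).differentiableOn fun _ hp ↦ hp) n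
  intro x
  have hx : DifferentiableAt ℂ (fun p : ℂ × E ↦ iteratedDeriv n (fun ζ ↦ G (ζ • p.2)) p.1) (0, x) :=
    hdiff.differentiableAt (hopen.mem_nhds (by simpa using hR))
  exact (hx.comp x ((differentiableAt_const (0 : ℂ)).prodMk differentiableAt_id)).const_smul _

end TaylorTerm

section Caratheodory

theorem norm_circleAverage_le {E : Type*} [NormedAddCommGroup E] [NormedSpace ℝ E] (f : ℂ → E)
    (c : ℂ) (R : ℝ) : ‖Real.circleAverage f c R‖ ≤ Real.circleAverage (fun ζ ↦ ‖f ζ‖) c R := by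
  rw [Real.circleAverage_def, Real.circleAverage_def, norm_smul,
    Real.norm_of_nonneg (by positivity), smul_eq_mul]
  gcongr
  exact intervalIntegral.norm_integral_le_integral_norm Real.two_pi_pos.le

theorem circleAverage_conj_pow_mul {q : ℂ → ℂ} {ρ : ℝ} (hρ : 0 < ρ)
    (hq : DifferentiableOn ℂ q (closedBall 0 ρ)) (k : ℕ) :
    Real.circleAverage (fun ζ ↦ conj ζ ^ k * q ζ) 0 ρ =
      ρ ^ (2 * k) * ((k ! : ℂ)⁻¹ * iteratedDeriv k q 0) := by
  have hconj : ∀ ζ ∈ sphere (0 : ℂ) ρ, conj ζ = ρ ^ 2 / ζ := fun ζ hζ ↦ by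
    rw [eq_div_iff (ne_of_mem_sphere hζ hρ.ne'), conj_mul', mem_sphere_zero_iff_norm.1 hζ]
  rw [Real.circleAverage_eq_circleIntegral hρ.ne']
  calc (2 * Real.pi * I : ℂ)⁻¹ • ∮ ζ in C(0, ρ), (ζ - 0)⁻¹ • (conj ζ ^ k * q ζ)
      = (2 * Real.pi * I : ℂ)⁻¹ •
          ∮ ζ in C(0, ρ), (ρ ^ (2 * k) : ℂ) • ((1 / (ζ - 0) ^ (k + 1)) • q ζ) := by
        congr 1
        refine circleIntegral.integral_congr hρ.le fun ζ hζ ↦ ?_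
        have hζ0 : ζ ≠ 0 := ne_of_mem_sphere hζ hρ.ne'
        simp only [hconj ζ hζ, sub_zero, smul_eq_mul]
        rw [div_pow, ← pow_mul]
        field_simp
        ring
    _ = ρ ^ (2 * k) * ((k ! : ℂ)⁻¹ * iteratedDeriv k q 0) := by
        have := two_pi_I_ne_zero
        rw [circleIntegral.integral_smul,
          hq.circleIntegral_one_div_sub_center_pow_smul hρ k]
        simp only [smul_eq_mul]
        field_simp

theorem circleAverage_conj_pow_mul_conj {q : ℂ → ℂ} {ρ : ℝ} (hρ : 0 < ρ)
    (hq : DifferentiableOn ℂ q (closedBall 0 ρ)) {k : ℕ} (hk : k ≠ 0) :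
    Real.circleAverage (fun ζ ↦ conj ζ ^ k * conj (q ζ)) 0 ρ = 0 := by
  have hdiff : DifferentiableOn ℂ (fun ζ ↦ ζ ^ k * q ζ) (closedBall 0 ρ) := by fun_prop
  have hint : CircleIntegrable (fun ζ ↦ ζ ^ k * q ζ) 0 ρ :=
    (hdiff.continuousOn.mono sphere_subset_closedBall).circleIntegrable hρ.le
  have hmean : Real.circleAverage (fun ζ ↦ ζ ^ k * q ζ) 0 ρ = 0 := by
    rw [DiffContOnCl.circleAverage, zero_pow hk, zero_mul]
    rw [abs_of_pos hρ]
    exact (hdiff.mono closure_ball_subset_closedBall).diffContOnCl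
  have hcomm := conjCLE.toContinuousLinearMap.circleAverage_comp_comm hint
  rw [hmean] at hcomm
  simpa [Function.comp_def] using hcomm

theorem pow_mul_norm_iteratedDeriv_le_of_re_nonpos {q : ℂ → ℂ} {ρ : ℝ} (hρ : 0 < ρ)
    (hq : DifferentiableOn ℂ q (closedBall 0 ρ)) (hre : ∀ ζ ∈ sphere 0 ρ, (q ζ).re ≤ 0)
    {k : ℕ} (hk : k ≠ 0) :
    ρ ^ k * ‖(k ! : ℂ)⁻¹ * iteratedDeriv k q 0‖ ≤ 2 * -(q 0).re := by
  have hqc : ContinuousOn q (sphere 0 ρ) := hq.continuousOn.mono sphere_subset_closedBall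
  have hint {f : ℂ → ℂ} (hf : ContinuousOn f (sphere 0 ρ)) : CircleIntegrable f 0 ρ :=
    hf.circleIntegrable hρ.le
  have hmean : Real.circleAverage (fun ζ ↦ (q ζ).re) 0 ρ = (q 0).re := by
    have hcomm := reCLM.circleAverage_comp_comm (hint hqc)
    rwa [DiffContOnCl.circleAverage (f := q)] at hcomm
    rw [abs_of_pos hρ]
    exact (hq.mono closure_ball_subset_closedBall).diffContOnCl
  have hcoeff : Real.circleAverage (fun ζ ↦ conj ζ ^ k * (2 * (q ζ).re : ℝ)) 0 ρ =
      ρ ^ (2 * k) * ((k ! : ℂ)⁻¹ * iteratedDeriv k q 0) := by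
    simp only [← add_conj, mul_add]
    rw [Real.circleAverage_fun_add (hint (by fun_prop)) (hint (by fun_prop)),
      circleAverage_conj_pow_mul hρ hq, circleAverage_conj_pow_mul_conj hρ hq hk, add_zero]
  have hnorm : ρ ^ (2 * k) * ‖(k ! : ℂ)⁻¹ * iteratedDeriv k q 0‖ ≤ ρ ^ k * (2 * -(q 0).re) := by
    calc ρ ^ (2 * k) * ‖(k ! : ℂ)⁻¹ * iteratedDeriv k q 0‖
        = ‖Real.circleAverage (fun ζ ↦ conj ζ ^ k * (2 * (q ζ).re : ℝ)) 0 ρ‖ := by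
          rw [hcoeff, norm_mul (_ ^ _), norm_pow, norm_real, Real.norm_of_nonneg hρ.le]
      _ ≤ Real.circleAverage (fun ζ ↦ ‖conj ζ ^ k * (2 * (q ζ).re : ℝ)‖) 0 ρ :=
          norm_circleAverage_le _ _ _
      _ = Real.circleAverage (fun ζ ↦ (-2 * ρ ^ k) • (q ζ).re) 0 ρ := by
          refine Real.circleAverage_congr_sphere fun ζ hζ ↦ ?_
          rw [abs_of_pos hρ] at hζ
          simp only [norm_mul, norm_pow, norm_conj, norm_real, mem_sphere_zero_iff_norm.1 hζ,
            Real.norm_of_nonpos (hre ζ hζ), Real.norm_ofNat, smul_eq_mul]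
          ring
      _ = ρ ^ k * (2 * -(q 0).re) := by
          rw [Real.circleAverage_fun_smul, hmean, smul_eq_mul]
          ring
  rw [two_mul k, pow_add, mul_assoc] at hnorm
  exact le_of_mul_le_mul_left hnorm (by positivity)

theorem pow_mul_norm_iteratedDeriv_le_of_re_le {q : ℂ → ℂ} {ρ β : ℝ} (hρ : 0 < ρ)
    (hq : DifferentiableOn ℂ q (closedBall 0 ρ)) (hre : ∀ ζ ∈ sphere 0 ρ, (q ζ).re ≤ β)
    {k : ℕ} (hk : k ≠ 0) :
    ρ ^ k * ‖(k ! : ℂ)⁻¹ * iteratedDeriv k q 0‖ ≤ 2 * (β - (q 0).re) := by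
  have hshift := pow_mul_norm_iteratedDeriv_le_of_re_nonpos hρ (hq.const_add (-β : ℂ))
    (fun ζ hζ ↦ by simpa using hre ζ hζ) hk
  rw [iteratedDeriv_const_add (Nat.pos_of_ne_zero hk)] at hshift
  simpa [sub_eq_neg_add] using hshift

/-- The function `(g ζ - g 0) / ζ + conj (g 0) * ζ` attached to a holomorphic function `g` on the
disc. The correction term is chosen so that its real part equals `Re (conj ζ * g ζ)` on the unit
circle, while it only affects the Taylor coefficient of order one. -/
noncomputable def reflectedSlope (g : ℂ → ℂ) (ζ : ℂ) : ℂ := dslope g 0 ζ + conj (g 0) * ζ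

theorem differentiableOn_reflectedSlope {g : ℂ → ℂ} {s : Set ℂ} (hs : s ∈ 𝓝 0)
    (hg : DifferentiableOn ℂ g s) : DifferentiableOn ℂ (reflectedSlope g) s :=
  ((differentiableOn_dslope hs).2 hg).add (by fun_prop)

theorem reflectedSlope_zero (g : ℂ → ℂ) : reflectedSlope g 0 = deriv g 0 := by
  simp [reflectedSlope]

theorem norm_sq_mul_re_reflectedSlope (g : ℂ → ℂ) {ζ : ℂ} (hζ : ζ ≠ 0) :
    ‖ζ‖ ^ 2 * (reflectedSlope g ζ).re =
      (conj ζ * g ζ).re - (1 - ‖ζ‖ ^ 2) * (conj ζ * g 0).re := by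
  have hmul : (‖ζ‖ ^ 2 : ℝ) * reflectedSlope g ζ =
      conj ζ * g ζ - conj ζ * g 0 + (‖ζ‖ ^ 2 : ℝ) * conj (conj ζ * g 0) := by
    rw [reflectedSlope, dslope_of_ne _ hζ, slope_def_field, ofReal_pow, ← conj_mul']
    simp only [map_mul, conj_conj, sub_zero]
    field_simp
  have hre := congrArg re hmul
  simp only [re_ofReal_mul, add_re, sub_re, conj_re] at hre
  rw [hre]
  ring

theorem inv_factorial_mul_iteratedDeriv_reflectedSlope {g : ℂ → ℂ} (hg : AnalyticAt ℂ g 0) (n : ℕ) :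
    ((n + 1)! : ℂ)⁻¹ * iteratedDeriv (n + 1) (reflectedSlope g) 0 =
      ((n + 2)! : ℂ)⁻¹ * iteratedDeriv (n + 2) g 0 + if n = 0 then conj (g 0) else 0 := by
  have hslope : AnalyticAt ℂ (dslope g 0) 0 := by
    obtain ⟨p, hp⟩ := hg
    exact hp.has_fpower_series_dslope_fslope.analyticAt
  have hcoeff := inv_factorial_smul_iteratedDeriv_dslope hg (n + 1)
  simp only [smul_eq_mul] at hcoeff
  have hadd : iteratedDeriv (n + 1) (reflectedSlope g) 0 =
      iteratedDeriv (n + 1) (dslope g 0) 0 + conj (g 0) * if n = 0 then 1 else 0 := by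
    unfold reflectedSlope
    rw [iteratedDeriv_fun_add hslope.contDiffAt (by fun_prop), iteratedDeriv_const_mul_field,
      iteratedDeriv_fun_id_zero]
    simp only [Nat.add_eq_right]
  rw [hadd, mul_add, hcoeff]
  rcases n with _ | n <;> simp

theorem re_reflectedSlope_le {g : ℂ → ℂ} {a b : ℝ} {ζ : ℂ} (hζ0 : ζ ≠ 0) (hζ1 : ‖ζ‖ ≤ 1)
    (h : (conj ζ * g ζ).re ≤ a * ‖ζ‖ ^ 2 + b * (1 - ‖ζ‖ ^ 2)) :
    (reflectedSlope g ζ).re ≤ a + (b + ‖g 0‖) * ((1 - ‖ζ‖ ^ 2) / ‖ζ‖ ^ 2) := by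
  have hpos : 0 < ‖ζ‖ := norm_pos_iff.2 hζ0
  have hconst : -‖g 0‖ ≤ (conj ζ * g 0).re := by
    refine neg_le_of_abs_le ((abs_re_le_norm _).trans ?_)
    rw [norm_mul, norm_conj]
    exact mul_le_of_le_one_left (norm_nonneg _) hζ1
  have hscaled : ‖ζ‖ ^ 2 * (reflectedSlope g ζ).re ≤
      a * ‖ζ‖ ^ 2 + (b + ‖g 0‖) * (1 - ‖ζ‖ ^ 2) := by
    rw [norm_sq_mul_re_reflectedSlope g hζ0]
    nlinarith [pow_le_one₀ (n := 2) hpos.le hζ1]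
  calc (reflectedSlope g ζ).re ≤ (a * ‖ζ‖ ^ 2 + (b + ‖g 0‖) * (1 - ‖ζ‖ ^ 2)) / ‖ζ‖ ^ 2 := by
        rwa [le_div_iff₀' (by positivity)]
    _ = a + (b + ‖g 0‖) * ((1 - ‖ζ‖ ^ 2) / ‖ζ‖ ^ 2) := by field_simp

theorem norm_iteratedDeriv_add_le_of_re_conj_mul_le {g : ℂ → ℂ} {a b ε : ℝ} (hε : 0 < ε)
    (hg : DifferentiableOn ℂ g (ball 0 1))
    (hre : ∀ ζ : ℂ, 1 - ε < ‖ζ‖ → ‖ζ‖ < 1 →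
      (conj ζ * g ζ).re ≤ a * ‖ζ‖ ^ 2 + b * (1 - ‖ζ‖ ^ 2)) (n : ℕ) :
    ‖((n + 2)! : ℂ)⁻¹ * iteratedDeriv (n + 2) g 0 + if n = 0 then conj (g 0) else 0‖ ≤
      2 * (a - (deriv g 0).re) := by
  have h0 : ball (0 : ℂ) 1 ∈ 𝓝 0 := ball_mem_nhds 0 one_pos
  rw [← inv_factorial_mul_iteratedDeriv_reflectedSlope (hg.analyticAt h0), ← reflectedSlope_zero]
  set C := ‖((n + 1)! : ℂ)⁻¹ * iteratedDeriv (n + 1) (reflectedSlope g) 0‖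
  set m := (reflectedSlope g 0).re
  have hcoeff : ∀ᶠ ρ : ℝ in 𝓝[<] 1,
      ρ ^ (n + 1) * C ≤ 2 * (a + (b + ‖g 0‖) * ((1 - ρ ^ 2) / ρ ^ 2) - m) := by
    have hpos : ∀ᶠ ρ : ℝ in 𝓝[<] 1, max 0 (1 - ε) < ρ :=
      nhdsWithin_le_nhds (lt_mem_nhds (by simp [hε]))
    filter_upwards [hpos, self_mem_nhdsWithin] with ρ hρ hρ1
    obtain ⟨hρ0, hρε⟩ := max_lt_iff.1 hρ
    replace hρ1 : ρ < 1 := hρ1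
    refine pow_mul_norm_iteratedDeriv_le_of_re_le hρ0
      ((differentiableOn_reflectedSlope h0 hg).mono (closedBall_subset_ball hρ1))
      (fun ζ hζ ↦ ?_) n.succ_ne_zero
    have hζρ : ‖ζ‖ = ρ := mem_sphere_zero_iff_norm.1 hζ
    simpa only [hζρ] using re_reflectedSlope_le (ne_of_mem_sphere hζ hρ0.ne') (hζρ ▸ hρ1.le)
      (hre ζ (hζρ ▸ hρε) (hζρ ▸ hρ1))
  have hlhs : Tendsto (fun ρ : ℝ ↦ ρ ^ (n + 1) * C) (𝓝[<] 1) (𝓝 C) := by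
    have hcont : ContinuousAt (fun ρ : ℝ ↦ ρ ^ (n + 1) * C) 1 := by fun_prop
    simpa using hcont.tendsto.mono_left nhdsWithin_le_nhds
  have hrhs : Tendsto (fun ρ : ℝ ↦ 2 * (a + (b + ‖g 0‖) * ((1 - ρ ^ 2) / ρ ^ 2) - m)) (𝓝[<] 1)
      (𝓝 (2 * (a - m))) := by
    have hcont : ContinuousAt
        (fun ρ : ℝ ↦ 2 * (a + (b + ‖g 0‖) * ((1 - ρ ^ 2) / ρ ^ 2) - m)) 1 := by
      fun_prop (disch := norm_num)
    simpa using hcont.tendsto.mono_left nhdsWithin_le_nhds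
  exact le_of_tendsto_of_tendsto hlhs hrhs hcoeff

end Caratheodory

section NumericalRange

variable {X : Type*} [NormedAddCommGroup X] [NormedSpace ℂ X]

/-- The spatial numerical range of a map `P : X → X`, which need not be linear: the values
`vs (P v)` over all unit vectors `v` and all functionals `vs` supporting the unit ball at `v`. -/
def numericalRange (P : X → X) : Set ℂ :=
  {w | ∃ (v : X) (vs : X →L[ℂ] ℂ), ‖v‖ = 1 ∧ vs v = 1 ∧ ‖vs‖ = 1 ∧ w = vs (P v)}

theorem image_numericalRange {α : Type*} (f : ℂ → α) (P : X → X) :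
    f '' numericalRange P = {x | ∃ (v : X) (vs : X →L[ℂ] ℂ),
      ‖v‖ = 1 ∧ vs v = 1 ∧ ‖vs‖ = 1 ∧ x = f (vs (P v))} := by
  ext x
  constructor
  · rintro ⟨_, ⟨v, vs, hv, hvsv, hvs, rfl⟩, rfl⟩
    exact ⟨v, vs, hv, hvsv, hvs, rfl⟩
  · rintro ⟨v, vs, hv, hvsv, hvs, rfl⟩
    exact mem_image_of_mem f ⟨v, vs, hv, hvsv, hvs, rfl⟩

theorem numericalRange_nonempty [Nontrivial X] (P : X → X) : (numericalRange P).Nonempty := by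
  obtain ⟨v, hv⟩ := exists_norm_eq X zero_le_one
  obtain ⟨vs, hvs, hvsv⟩ := exists_dual_vector ℂ v (by simp [hv])
  exact ⟨vs (P v), v, vs, hv, by simp [hvsv, hv], hvs, rfl⟩

theorem nonneg_of_numericalRange_subset_closedBall [Nontrivial X] {P : X → X} {K : ℝ}
    (h : numericalRange P ⊆ closedBall 0 K) : 0 ≤ K :=
  nonempty_closedBall.1 ((numericalRange_nonempty P).mono h)

theorem numericalRange_subset_closedBall_norm (A : X →L[ℂ] X) :
    numericalRange A ⊆ closedBall 0 ‖A‖ := by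
  rintro _ ⟨v, vs, hv, -, hvs, rfl⟩
  rw [mem_closedBall_zero_iff]
  calc ‖vs (A v)‖ ≤ ‖vs‖ * ‖A v‖ := vs.le_opNorm _
    _ ≤ 1 * (‖A‖ * 1) := by
        rw [hvs, ← hv]
        gcongr
        exact A.le_opNorm v
    _ = ‖A‖ := by ring

theorem numericalRange_subset_closedBall_sSup (A : X →L[ℂ] X) :
    numericalRange A ⊆ closedBall 0 (sSup (norm '' numericalRange A)) := fun _ hw ↦
  mem_closedBall_zero_iff.2 <| le_csSup ⟨‖A‖, forall_mem_image.2 fun _ hu ↦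
    mem_closedBall_zero_iff.1 (numericalRange_subset_closedBall_norm A hu)⟩ (mem_image_of_mem _ hw)

theorem sInf_re_numericalRange_le (A : X →L[ℂ] X) {w : ℂ} (hw : w ∈ numericalRange A) :
    sInf (re '' numericalRange A) ≤ w.re := by
  refine csInf_le ⟨-‖A‖, forall_mem_image.2 fun u hu ↦ ?_⟩ (mem_image_of_mem _ hw)
  exact neg_le_of_abs_le ((abs_re_le_norm u).trans
    (mem_closedBall_zero_iff.1 (numericalRange_subset_closedBall_norm A hu)))

end NumericalRange

section Homogeneous

variable {E F : Type*} [NormedAddCommGroup E] [NormedSpace ℂ E]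
  [NormedAddCommGroup F] [NormedSpace ℂ F] {P : E → F} {n : ℕ}

theorem exists_mapsTo_closedBall_of_homogeneous (hcont : ContinuousAt P 0)
    (hhom : ∀ (c : ℂ) x, P (c • x) = c ^ n • P x) (R : ℝ) :
    ∃ C, MapsTo P (closedBall 0 R) (closedBall 0 C) := by
  obtain ⟨δ, hδ, hball⟩ := Metric.mem_nhds_iff.1 (hcont (ball_mem_nhds (P 0) one_pos))
  obtain ⟨t, ht, htR⟩ : ∃ t, 0 < t ∧ t * R < δ := by
    have hlt : ∀ᶠ t in 𝓝[>] (0 : ℝ), t * R < δ := nhdsWithin_le_nhds <|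
      ContinuousAt.eventually_lt (by fun_prop) continuousAt_const (by simpa using hδ)
    exact (eventually_mem_nhdsWithin.and hlt).exists
  have ht0 : (t : ℂ) ≠ 0 := ofReal_ne_zero.2 ht.ne'
  refine ⟨(t⁻¹) ^ n * (‖P 0‖ + 1), fun x hx ↦ mem_closedBall_zero_iff.2 ?_⟩
  rw [mem_closedBall_zero_iff] at hx
  have hsmall : P ((t : ℂ) • x) ∈ ball (P 0) 1 := hball <| by
    rw [mem_ball_zero_iff, norm_smul, norm_real, Real.norm_of_nonneg ht.le]
    exact (mul_le_mul_of_nonneg_left hx ht.le).trans_lt htR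
  calc ‖P x‖ = ‖P ((t : ℂ)⁻¹ • (t : ℂ) • x)‖ := by rw [inv_smul_smul₀ ht0]
    _ = t⁻¹ ^ n * ‖P ((t : ℂ) • x)‖ := by
        rw [hhom, norm_smul, norm_pow, norm_inv, norm_real, Real.norm_of_nonneg ht.le]
    _ ≤ t⁻¹ ^ n * (‖P 0‖ + 1) := by
        gcongr
        linarith [norm_sub_norm_le (P ((t : ℂ) • x)) (P 0), mem_ball_iff_norm.1 hsmall]

theorem apply_zero_of_homogeneous (hhom : ∀ (c : ℂ) x, P (c • x) = c ^ (n + 1) • P x) :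
    P 0 = 0 := by
  simpa using hhom 0 0

theorem norm_le_mul_pow_of_homogeneous (hhom : ∀ (c : ℂ) x, P (c • x) = c ^ (n + 1) • P x)
    {C : ℝ} (hC : ∀ v, ‖v‖ = 1 → ‖P v‖ ≤ C) (x : E) : ‖P x‖ ≤ C * ‖x‖ ^ (n + 1) := by
  rcases eq_or_ne x 0 with rfl | hx
  · simp [apply_zero_of_homogeneous hhom]
  have hx0 : (‖x‖ : ℂ) ≠ 0 := ofReal_ne_zero.2 (norm_ne_zero_iff.2 hx)
  calc ‖P x‖ = ‖P ((‖x‖ : ℂ) • (‖x‖ : ℂ)⁻¹ • x)‖ := by rw [smul_inv_smul₀ hx0]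
    _ = ‖x‖ ^ (n + 1) * ‖P ((‖x‖ : ℂ)⁻¹ • x)‖ := by
        rw [hhom, norm_smul, norm_pow, norm_real, norm_norm]
    _ ≤ ‖x‖ ^ (n + 1) * C := by
        gcongr
        exact hC _ (norm_smul_inv_norm hx)
    _ = C * ‖x‖ ^ (n + 1) := mul_comm _ _

theorem exists_norm_sub_le_mul_of_homogeneous (hdiff : Differentiable ℂ P)
    (hhom : ∀ (c : ℂ) x, P (c • x) = c ^ n • P x) (R : ℝ) :
    ∃ L ≥ 0, ∀ v ∈ closedBall 0 R, ∀ w ∈ ball v 1, ‖P w - P v‖ ≤ L * ‖w - v‖ := by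
  obtain ⟨C, hC⟩ :=
    exists_mapsTo_closedBall_of_homogeneous hdiff.continuous.continuousAt hhom (R + 1)
  refine ⟨2 * max C 0, by positivity, fun v hv w hw ↦ ?_⟩
  have hbound {y : E} (hy : y ∈ ball v 1) : ‖P y‖ ≤ max C 0 :=
    le_max_of_le_left <| mem_closedBall_zero_iff.1 <| hC <|
      closedBall_subset_closedBall' (by linarith [mem_closedBall.1 hv]) (ball_subset_closedBall hy)
  have hmaps : MapsTo P (ball v 1) (closedBall (P v) (2 * max C 0)) := fun y hy ↦ by
    rw [mem_closedBall_iff_norm]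
    linarith [norm_sub_le (P y) (P v), hbound hy, hbound (mem_ball_self one_pos)]
  simpa only [dist_eq_norm, div_one] using
    dist_le_div_mul_dist_of_mapsTo_ball hdiff.differentiableOn hmaps hw

end Homogeneous

section EulerStep

variable {X : Type*} [NormedAddCommGroup X] [NormedSpace ℂ X] {P : X → X} {n : ℕ} {K K' : ℝ}

theorem norm_apply_le_of_numericalRange_subset_closedBall
    (hhom : ∀ (c : ℂ) x, P (c • x) = c ^ (n + 1) • P x)
    (hnum : numericalRange P ⊆ closedBall 0 K) {w : X} {ws : X →L[ℂ] ℂ} (hws : ‖ws‖ = 1)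
    (hw : ws w = ‖w‖) : ‖ws (P w)‖ ≤ K * ‖w‖ ^ (n + 1) := by
  rcases eq_or_ne w 0 with rfl | hw0
  · simp [apply_zero_of_homogeneous hhom]
  have hnorm : (‖w‖ : ℂ) ≠ 0 := ofReal_ne_zero.2 (norm_ne_zero_iff.2 hw0)
  have hunit : ws (P ((‖w‖ : ℂ)⁻¹ • w)) ∈ closedBall 0 K :=
    hnum ⟨(‖w‖ : ℂ)⁻¹ • w, ws, norm_smul_inv_norm hw0, by simp [hw, hnorm], hws, rfl⟩
  calc ‖ws (P w)‖ = ‖ws (P ((‖w‖ : ℂ) • (‖w‖ : ℂ)⁻¹ • w))‖ := by rw [smul_inv_smul₀ hnorm]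
    _ = ‖ws (P ((‖w‖ : ℂ)⁻¹ • w))‖ * ‖w‖ ^ (n + 1) := by
        rw [hhom, map_smul, norm_smul, norm_pow, norm_real, norm_norm, mul_comm]
    _ ≤ K * ‖w‖ ^ (n + 1) := by
        gcongr
        exact mem_closedBall_zero_iff.1 hunit

/-- One step of the explicit Euler scheme for the differential equation `y' = P y`, with complex
step size `c`; its iterates approximate the flow of `P`. -/
def eulerStep (P : X → X) (c : ℂ) (y : X) : X := y + c • P y

theorem eventually_norm_eulerStep_le (hdiff : Differentiable ℂ P)
    (hhom : ∀ (c : ℂ) x, P (c • x) = c ^ (n + 1) • P x)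
    (hnum : numericalRange P ⊆ closedBall 0 K) (hK : K < K') :
    ∀ᶠ c in 𝓝 (0 : ℂ), ∀ v, ‖v‖ = 1 → ‖eulerStep P c v‖ ≤ 1 + ‖c‖ * K' := by
  obtain ⟨C, hC⟩ := exists_mapsTo_closedBall_of_homogeneous hdiff.continuous.continuousAt hhom 1
  obtain ⟨L, hL0, hL⟩ := exists_norm_sub_le_mul_of_homogeneous hdiff hhom 1
  have hsmall : ∀ᶠ c in 𝓝 (0 : ℂ), ‖c‖ * C < 1 :=
    ContinuousAt.eventually_lt (by fun_prop) continuousAt_const (by simp)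
  have hrate : ∀ᶠ c in 𝓝 (0 : ℂ), L * (‖c‖ * C) + K * (1 + ‖c‖ * C) ^ (n + 1) < K' :=
    ContinuousAt.eventually_lt (by fun_prop) continuousAt_const (by simpa using hK)
  filter_upwards [hsmall, hrate] with c hcC hcK v hv
  have : Nontrivial X := nontrivial_of_ne v 0 (norm_ne_zero_iff.1 (by simp [hv]))
  have hK0 : 0 ≤ K := nonneg_of_numericalRange_subset_closedBall hnum
  have hv1 : v ∈ closedBall 0 1 := mem_closedBall_zero_iff.2 hv.le
  set w := eulerStep P c v with hw
  have hwv : ‖w - v‖ ≤ ‖c‖ * C := by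
    rw [hw, eulerStep, add_sub_cancel_left, norm_smul]
    gcongr
    exact mem_closedBall_zero_iff.1 (hC hv1)
  have hwnorm : ‖w‖ ≤ 1 + ‖c‖ * C := by linarith [norm_sub_norm_le w v]
  have hlip : ‖P w - P v‖ ≤ L * (‖c‖ * C) :=
    (hL v hv1 w (mem_ball_iff_norm.2 (hwv.trans_lt hcC))).trans (by gcongr)
  obtain ⟨ws, hws, hwsw⟩ := exists_dual_vector' ℂ w
  have hle (y : X) : ‖ws y‖ ≤ ‖y‖ := by simpa [hws] using ws.le_opNorm y
  have hsplit : ws w = ws v - c * ws (P w - P v) + c * ws (P w) := by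
    simp only [hw, eulerStep, map_add, map_smul, map_sub, smul_eq_mul]
    ring
  calc ‖w‖ = ‖ws v - c * ws (P w - P v) + c * ws (P w)‖ := by rw [← hsplit, hwsw]; simp
    _ ≤ ‖ws v‖ + ‖c‖ * ‖ws (P w - P v)‖ + ‖c‖ * ‖ws (P w)‖ := by
        rw [← norm_mul, ← norm_mul]
        exact (norm_add_le _ _).trans (by gcongr; exact norm_sub_le _ _)
    _ ≤ 1 + ‖c‖ * (L * (‖c‖ * C)) + ‖c‖ * (K * (1 + ‖c‖ * C) ^ (n + 1)) := by
        gcongr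
        · exact (hle v).trans_eq hv
        · exact (hle _).trans hlip
        · refine (norm_apply_le_of_numericalRange_subset_closedBall hhom hnum hws hwsw).trans ?_
          gcongr
    _ = 1 + ‖c‖ * (L * (‖c‖ * C) + K * (1 + ‖c‖ * C) ^ (n + 1)) := by ring
    _ ≤ 1 + ‖c‖ * K' := by gcongr

theorem exists_forall_norm_eulerStep_le (hdiff : Differentiable ℂ P)
    (hhom : ∀ (c : ℂ) x, P (c • x) = c ^ (n + 1) • P x)
    (hnum : numericalRange P ⊆ closedBall 0 K) (hK : K < K') :
    ∃ δ > 0, ∀ (c : ℂ) (y : X), ‖c‖ * ‖y‖ ^ n ≤ δ →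
      ‖eulerStep P c y‖ ≤ ‖y‖ * (1 + ‖c‖ * K' * ‖y‖ ^ n) := by
  obtain ⟨δ, hδ, hstep⟩ := Metric.eventually_nhds_iff_ball.1
    (eventually_norm_eulerStep_le hdiff hhom hnum hK)
  refine ⟨δ / 2, by positivity, fun c y hc ↦ ?_⟩
  rcases eq_or_ne y 0 with rfl | hy
  · simp [eulerStep, apply_zero_of_homogeneous hhom]
  have hy0 : (‖y‖ : ℂ) ≠ 0 := ofReal_ne_zero.2 (norm_ne_zero_iff.2 hy)
  have hc' : ‖c * (‖y‖ : ℂ) ^ n‖ = ‖c‖ * ‖y‖ ^ n := by simp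
  set v := (‖y‖ : ℂ)⁻¹ • y
  have hscale : eulerStep P c y = (‖y‖ : ℂ) • eulerStep P (c * (‖y‖ : ℂ) ^ n) v := by
    have hyv : y = (‖y‖ : ℂ) • v := (smul_inv_smul₀ hy0 y).symm
    have hPy : P y = (‖y‖ : ℂ) ^ (n + 1) • P v := by rw [← hhom, ← hyv]
    rw [eulerStep, eulerStep, smul_add, ← hyv, hPy, smul_smul, smul_smul]
    congr 2
    ring
  have hunit := hstep (c * (‖y‖ : ℂ) ^ n) (by rw [mem_ball_zero_iff, hc']; linarith) v
    (norm_smul_inv_norm hy)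
  rw [hc', mul_right_comm] at hunit
  rw [hscale, norm_smul, norm_real, norm_norm]
  gcongr

theorem differentiable_iterate_eulerStep (hdiff : Differentiable ℂ P) (x : X) (N : ℕ) :
    Differentiable ℂ (fun ζ ↦ (eulerStep P ζ)^[N] x) := by
  induction N with
  | zero => simp
  | succ N ih =>
    simp only [Function.iterate_succ_apply', eulerStep]
    exact ih.add (differentiable_id.smul (hdiff.comp ih))

theorem iterate_eulerStep_zero (x : X) (N : ℕ) : (eulerStep P 0)^[N] x = x :=
  Function.iterate_fixed (by simp [eulerStep]) N

theorem hasDerivAt_iterate_eulerStep (hdiff : Differentiable ℂ P) (x : X) (N : ℕ) :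
    HasDerivAt (fun ζ ↦ (eulerStep P ζ)^[N] x) (N • P x) 0 := by
  induction N with
  | zero => simpa using hasDerivAt_const (0 : ℂ) x
  | succ N ih =>
    have hP : HasDerivAt (fun ζ ↦ P ((eulerStep P ζ)^[N] x)) _ 0 :=
      (hdiff.comp (differentiable_iterate_eulerStep hdiff x N) 0).hasDerivAt
    have hsum := ih.fun_add ((hasDerivAt_id' (0 : ℂ)).fun_smul hP)
    simpa [Function.iterate_succ_apply', eulerStep, iterate_eulerStep_zero, succ_nsmul] using hsum

theorem mul_norm_le_of_norm_iterate_eulerStep_le (hdiff : Differentiable ℂ P) {x : X} {N : ℕ}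
    {h M : ℝ} (hh : 0 < h) (hM : ∀ ζ : ℂ, ‖ζ‖ = h → ‖(eulerStep P ζ)^[N] x‖ ≤ M) :
    N * h * ‖P x‖ ≤ M := by
  have hcauchy := norm_deriv_le_of_forall_mem_sphere_norm_le hh
    (differentiable_iterate_eulerStep hdiff x N).diffContOnCl
    fun ζ hζ ↦ hM ζ (mem_sphere_zero_iff_norm.1 hζ)
  rw [(hasDerivAt_iterate_eulerStep hdiff x N).deriv, ← Nat.cast_smul_eq_nsmul ℂ, norm_smul,
    norm_natCast, le_div_iff₀ hh] at hcauchy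
  linarith

theorem one_add_pow_mul_one_sub_le_one {t : ℝ} (ht : 0 ≤ t) (n : ℕ) :
    (1 + t) ^ n * (1 - n * t) ≤ 1 := by
  rcases le_total (n * t) 1 with hnt | hnt
  · calc (1 + t) ^ n * (1 - n * t) ≤ Real.exp t ^ n * Real.exp (-(n * t)) := by
          gcongr
          · linarith [Real.add_one_le_exp t]
          · linarith [Real.add_one_le_exp (-(n * t))]
      _ = 1 := by rw [← Real.exp_nat_mul, ← Real.exp_add, add_neg_cancel, Real.exp_zero]
  · exact (mul_nonpos_of_nonneg_of_nonpos (by positivity) (by linarith)).trans zero_le_one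

theorem exists_nat_mul_eq {T δ : ℝ} (hT : 0 < T) (hδ : 0 < δ) :
    ∃ (N : ℕ) (h : ℝ), 0 < h ∧ h ≤ δ ∧ N * h = T := by
  obtain ⟨N, hN⟩ := exists_nat_gt (T / δ)
  have hN0 : (0 : ℝ) < N := lt_of_le_of_lt (by positivity) hN
  exact ⟨N, T / N, by positivity, (div_le_comm₀ hδ hN0).1 hN.le, mul_div_cancel₀ T hN0.ne'⟩

theorem norm_clm_apply_le_of_numericalRange_subset_closedBall {A : X →L[ℂ] X}
    (hnum : numericalRange A ⊆ closedBall 0 K) (x : X) : ‖A x‖ ≤ Real.exp 1 * K * ‖x‖ := by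
  have hhom (c : ℂ) (x : X) : A (c • x) = c ^ (0 + 1) • A x := by simp
  suffices hunit : ∀ v, ‖v‖ = 1 → ‖A v‖ ≤ Real.exp 1 * K by
    simpa using norm_le_mul_pow_of_homogeneous hhom hunit x
  intro v hv
  rw [← div_le_iff₀' (Real.exp_pos 1)]
  refine le_of_forall_gt_imp_ge_of_dense fun K' hK' ↦ (div_le_iff₀' (Real.exp_pos 1)).2 ?_
  have : Nontrivial X := nontrivial_of_ne v 0 (norm_ne_zero_iff.1 (by simp [hv]))
  have hK'0 : 0 < K' := (nonneg_of_numericalRange_subset_closedBall hnum).trans_lt hK'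
  obtain ⟨δ, hδ, hstep⟩ := exists_forall_norm_eulerStep_le A.differentiable hhom hnum hK'
  obtain ⟨N, h, hh, hhδ, hNh⟩ := exists_nat_mul_eq (inv_pos.2 hK'0) hδ
  have hiter (ζ : ℂ) (hζ : ‖ζ‖ = h) (j : ℕ) :
      ‖(eulerStep A ζ)^[j] v‖ ≤ Real.exp (h * K') ^ j := by
    induction j with
    | zero => simp [hv]
    | succ j ih =>
      rw [Function.iterate_succ_apply', pow_succ]
      refine (hstep ζ _ (by simpa [hζ] using hhδ)).trans ?_
      rw [hζ, pow_zero, mul_one]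
      gcongr
      linarith [Real.add_one_le_exp (h * K')]
  have hbound := mul_norm_le_of_norm_iterate_eulerStep_le A.differentiable hh
    fun ζ hζ ↦ hiter ζ hζ N
  rw [hNh, ← Real.exp_nat_mul, ← mul_assoc, hNh, inv_mul_cancel₀ hK'0.ne'] at hbound
  rwa [inv_mul_le_iff₀ hK'0, mul_comm] at hbound

theorem le_add_one_of_mul_one_sub_le_one {A s : ℝ} {n : ℕ} (hA : 0 ≤ A) (hs : (n + 1) * s ≤ 1)
    (h : A * (1 - n * s) ≤ 1) : A ≤ n + 1 := by
  have : (0 : ℝ) ≤ n := n.cast_nonneg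
  calc A ≤ A * ((n + 1) * (1 - n * s)) := le_mul_of_one_le_right hA (by nlinarith)
    _ = (n + 1) * (A * (1 - n * s)) := by ring
    _ ≤ n + 1 := mul_le_of_le_one_right (by positivity) h

-- The bound is the one satisfied by the solution of `y' = K' * y ^ (n + 1)`, `y 0 = 1`.
theorem norm_iterate_eulerStep_pow_mul_le {δ : ℝ} {c : ℂ} (hK' : 0 ≤ K')
    (hstep : ∀ y, ‖c‖ * ‖y‖ ^ n ≤ δ → ‖eulerStep P c y‖ ≤ ‖y‖ * (1 + ‖c‖ * K' * ‖y‖ ^ n))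
    (hc : ‖c‖ * (n + 1) ≤ δ) {x : X} (hx : ‖x‖ = 1) {j : ℕ}
    (hj : (n + 1) * (j * ‖c‖ * K') ≤ 1) :
    ‖(eulerStep P c)^[j] x‖ ^ n * (1 - n * (j * ‖c‖ * K')) ≤ 1 := by
  induction j with
  | zero => simp [hx]
  | succ j ih =>
    have hj' : (n + 1) * (j * ‖c‖ * K') ≤ 1 := by
      refine le_trans ?_ hj
      gcongr
      exact j.le_succ
    set y := (eulerStep P c)^[j] x
    set t := ‖c‖ * K' * ‖y‖ ^ n with ht
    have hy : ‖y‖ ^ n ≤ n + 1 := le_add_one_of_mul_one_sub_le_one (by positivity) hj' (ih hj')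
    have hys : ‖y‖ ^ n * (1 - n * ((j + 1 : ℕ) * ‖c‖ * K')) ≤ 1 - n * t := by
      rw [ht]
      push_cast
      linarith [ih hj']
    have hpos : 0 ≤ 1 - n * ((j + 1 : ℕ) * ‖c‖ * K') := by
      have : 0 ≤ (j + 1 : ℕ) * ‖c‖ * K' := by positivity
      linarith
    rw [Function.iterate_succ_apply']
    calc ‖eulerStep P c y‖ ^ n * (1 - n * ((j + 1 : ℕ) * ‖c‖ * K'))
        ≤ (‖y‖ * (1 + t)) ^ n * (1 - n * ((j + 1 : ℕ) * ‖c‖ * K')) := by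
          gcongr
          exact hstep y ((mul_le_mul_of_nonneg_left hy (norm_nonneg c)).trans hc)
      _ = (1 + t) ^ n * (‖y‖ ^ n * (1 - n * ((j + 1 : ℕ) * ‖c‖ * K'))) := by
          rw [mul_pow]
          ring
      _ ≤ (1 + t) ^ n * (1 - n * t) := by gcongr
      _ ≤ 1 := one_add_pow_mul_one_sub_le_one (by positivity) n

theorem norm_le_of_numericalRange_subset_closedBall (hn : n ≠ 0) (hdiff : Differentiable ℂ P)
    (hhom : ∀ (c : ℂ) x, P (c • x) = c ^ (n + 1) • P x)
    (hnum : numericalRange P ⊆ closedBall 0 K) {B : ℝ} (hB : 0 < B) (hBn : n + 1 ≤ B ^ n) (x : X) :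
    ‖P x‖ ≤ (n + 1) * B * K * ‖x‖ ^ (n + 1) := by
  refine norm_le_mul_pow_of_homogeneous hhom (fun v hv ↦ ?_) x
  have hnB : 0 < (n + 1) * B := by positivity
  rw [← div_le_iff₀' hnB]
  refine le_of_forall_gt_imp_ge_of_dense fun K' hK' ↦ (div_le_iff₀' hnB).2 ?_
  have : Nontrivial X := nontrivial_of_ne v 0 (norm_ne_zero_iff.1 (by simp [hv]))
  have hK'0 : 0 < K' := (nonneg_of_numericalRange_subset_closedBall hnum).trans_lt hK'
  obtain ⟨δ, hδ, hstep⟩ := exists_forall_norm_eulerStep_le hdiff hhom hnum hK'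
  obtain ⟨N, h, hh, hhδ, hNh⟩ := exists_nat_mul_eq (T := ((n + 1) * K')⁻¹) (δ := δ / (n + 1))
    (by positivity) (by positivity)
  have htime : (n + 1) * (N * h * K') = 1 := by
    rw [hNh]
    field_simp
  have hiter (ζ : ℂ) (hζ : ‖ζ‖ = h) : ‖(eulerStep P ζ)^[N] v‖ ≤ B := by
    have hinv := norm_iterate_eulerStep_pow_mul_le hK'0.le (hstep ζ)
      (by rwa [hζ, ← le_div_iff₀ (by positivity)]) hv (by rw [hζ, htime])
    rw [hζ] at hinv
    exact le_of_pow_le_pow_left₀ hn hB.le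
      ((le_add_one_of_mul_one_sub_le_one (by positivity) htime.le hinv).trans hBn)
  have hbound := mul_norm_le_of_norm_iterate_eulerStep_le hdiff hh hiter
  rw [hNh, inv_mul_le_iff₀ (by positivity)] at hbound
  linarith

theorem add_two_le_div_pow (n : ℕ) :
    (n + 2 : ℝ) ≤ (4 * (1 + (1 - Real.log 2) * n) / (n + 2)) ^ (n + 1) := by
  have hlog : 4 + 1.2272 * n ≤ 4 * (1 + (1 - Real.log 2) * n) := by
    nlinarith [Real.log_two_lt_d9, n.cast_nonneg (α := ℝ)]
  have hlarge (m : ℕ) (hm : 12 ≤ m) : (m + 2 : ℝ) ≤ 1.2272 ^ (m + 1) := by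
    induction m, hm using Nat.le_induction with
    | base => norm_num
    | succ m hm ih =>
      have hm' : (12 : ℝ) ≤ m := by exact_mod_cast hm
      rw [pow_succ]
      push_cast
      linarith
  calc (n + 2 : ℝ) ≤ ((4 + 1.2272 * n) / (n + 2)) ^ (n + 1) := by
        rcases lt_or_ge n 12 with hn | hn
        · interval_cases n <;> norm_num
        · refine (hlarge n hn).trans ?_
          gcongr
          rw [le_div_iff₀ (by positivity)]
          linarith
    _ ≤ (4 * (1 + (1 - Real.log 2) * n) / (n + 2)) ^ (n + 1) := by gcongr

theorem norm_le_log_two_mul_of_numericalRange_subset_closedBall (hdiff : Differentiable ℂ P)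
    (hhom : ∀ (c : ℂ) x, P (c • x) = c ^ (n + 2) • P x)
    (hnum : numericalRange P ⊆ closedBall 0 K) (x : X) :
    ‖P x‖ ≤ 4 * (1 + (1 - Real.log 2) * n) * K * ‖x‖ ^ (n + 2) := by
  have hlog : 0 < 1 - Real.log 2 := by linarith [Real.log_two_lt_d9]
  have hbound := norm_le_of_numericalRange_subset_closedBall n.succ_ne_zero hdiff hhom hnum
    (B := 4 * (1 + (1 - Real.log 2) * n) / (n + 2)) (by positivity)
    (by simpa [add_assoc, one_add_one_eq_two] using add_two_le_div_pow n) x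
  have hcoeff : ((n + 1 : ℕ) + 1) * (4 * (1 + (1 - Real.log 2) * n) / (n + 2)) =
      4 * (1 + (1 - Real.log 2) * n) := by
    push_cast
    rw [add_assoc, one_add_one_eq_two, mul_div_cancel₀ _ (by positivity)]
  rwa [hcoeff] at hbound

end EulerStep

section Growth

variable {X : Type*} [NormedAddCommGroup X] [NormedSpace ℂ X] {G : X → X} {a b ε : ℝ}

/-- Pseudo-dissipativity of `G : X → X` on the open unit ball, with constants `a`, `b`, `ε`, for
the angle `θ = 0`: the general case is that of the rotated map `exp (iθ) • G`. The functionals `zs`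
are the supporting functionals `z*` at `z`, so `‖zs‖ = ‖z‖` and `zs z = ‖z‖ ^ 2`. -/
def IsPseudoDissipative (G : X → X) (a b ε : ℝ) : Prop :=
  ∀ z : X, 1 - ε < ‖z‖ → ‖z‖ < 1 → ∀ zs : X →L[ℂ] ℂ, zs z = (‖z‖ ^ 2 : ℂ) → ‖zs‖ = ‖z‖ →
    (zs (G z)).re ≤ a * ‖z‖ ^ 2 + b * (1 - ‖z‖ ^ 2)

theorem IsPseudoDissipative.re_conj_mul_apply_le (h : IsPseudoDissipative G a b ε) {v : X}
    {vs : X →L[ℂ] ℂ} (hv : ‖v‖ = 1) (hvsv : vs v = 1) (hvs : ‖vs‖ = 1) {ζ : ℂ}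
    (hε : 1 - ε < ‖ζ‖) (hζ : ‖ζ‖ < 1) :
    (conj ζ * vs (G (ζ • v))).re ≤ a * ‖ζ‖ ^ 2 + b * (1 - ‖ζ‖ ^ 2) := by
  have hnorm : ‖ζ • v‖ = ‖ζ‖ := by rw [norm_smul, hv, mul_one]
  simpa [hnorm] using h (ζ • v) (hnorm ▸ hε) (hnorm ▸ hζ) (conj ζ • vs)
    (by simp [hnorm, hvsv, mul_conj']) (by simp [norm_smul, hvs, hnorm])

variable [CompleteSpace X]

theorem IsPseudoDissipative.norm_apply_taylorTerm_add_le (h : IsPseudoDissipative G a b ε)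
    (hε : 0 < ε) (hG : DifferentiableOn ℂ G (ball 0 1)) {v : X} {vs : X →L[ℂ] ℂ} (hv : ‖v‖ = 1)
    (hvsv : vs v = 1) (hvs : ‖vs‖ = 1) (n : ℕ) :
    ‖vs (taylorTerm G (n + 2) v) + if n = 0 then conj (vs (G 0)) else 0‖ ≤
      2 * (a - (vs (fderiv ℂ G 0 v)).re) := by
  have hslice : DifferentiableOn ℂ (fun ζ : ℂ ↦ vs (G (ζ • v))) (ball 0 1) :=
    vs.differentiable.comp_differentiableOn <| hG.comp (by fun_prop) fun ζ hζ ↦ by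
      simpa [norm_smul, hv] using hζ
  have hderiv : deriv (fun ζ : ℂ ↦ vs (G (ζ • v))) 0 = vs (fderiv ℂ G 0 v) := by
    rw [← taylorTerm_one (hG.differentiableAt (ball_mem_nhds 0 one_pos)),
      map_taylorTerm one_pos hG]
    simp [taylorTerm]
  rw [map_taylorTerm one_pos hG, ← hderiv]
  simpa [taylorTerm] using norm_iteratedDeriv_add_le_of_re_conj_mul_le hε hslice
    (fun ζ ↦ h.re_conj_mul_apply_le hv hvsv hvs) n

theorem IsPseudoDissipative.numericalRange_taylorTerm_subset (h : IsPseudoDissipative G a b ε)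
    (hε : 0 < ε) (hG : DifferentiableOn ℂ G (ball 0 1)) {m : ℝ}
    (hm : ∀ w ∈ numericalRange (fderiv ℂ G 0), m ≤ w.re) (n : ℕ) :
    numericalRange (taylorTerm G (n + 2)) ⊆
      closedBall 0 (2 * (a - m) + if n = 0 then ‖G 0‖ else 0) := by
  rintro _ ⟨v, vs, hv, hvsv, hvs, rfl⟩
  have hcoeff := h.norm_apply_taylorTerm_add_le hε hG hv hvsv hvs n
  have hmv : m ≤ (vs (fderiv ℂ G 0 v)).re := hm _ ⟨v, vs, hv, hvsv, hvs, rfl⟩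
  have hconst : ‖if n = 0 then conj (vs (G 0)) else 0‖ ≤ if n = 0 then ‖G 0‖ else 0 := by
    split_ifs
    · simpa [hvs] using vs.le_opNorm (G 0)
    · simp
  rw [mem_closedBall_zero_iff]
  exact (norm_le_add_norm_add _ _).trans (by gcongr; linarith)

theorem hasSum_pow_mul_one_add_mul {r : ℝ} (hr0 : 0 ≤ r) (hr1 : r < 1) (L : ℝ) :
    HasSum (fun n : ℕ ↦ r ^ n * (1 + (1 - L) * n)) ((1 - r * L) / (1 - r) ^ 2) := by
  have hlin := (hasSum_coe_mul_geometric_of_norm_lt_one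
    (by rwa [Real.norm_of_nonneg hr0])).mul_left (1 - L)
  have hr : 1 - r ≠ 0 := sub_ne_zero.2 hr1.ne'
  convert (hasSum_geometric_of_lt_one hr0 hr1).add hlin using 1
  · ext n
    ring
  · field_simp
    ring

theorem IsPseudoDissipative.norm_sub_sub_fderiv_le (h : IsPseudoDissipative G a b ε)
    (hε : 0 < ε) (hG : DifferentiableOn ℂ G (ball 0 1)) {m : ℝ}
    (hm : ∀ w ∈ numericalRange (fderiv ℂ G 0), m ≤ w.re) {z : X} (hz : z ∈ ball 0 1) :
    ‖G z - G 0 - fderiv ℂ G 0 z‖ ≤ 4 * ‖z‖ ^ 2 * ‖G 0‖ +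
      8 * ‖z‖ ^ 2 * ((1 - ‖z‖ * Real.log 2) / (1 - ‖z‖) ^ 2) * (a - m) := by
  have hterm (n : ℕ) : ‖taylorTerm G (n + 2) z‖ ≤ (if n = 0 then 4 * ‖z‖ ^ 2 * ‖G 0‖ else 0) +
      8 * ‖z‖ ^ 2 * (a - m) * (‖z‖ ^ n * (1 + (1 - Real.log 2) * n)) := by
    refine (norm_le_log_two_mul_of_numericalRange_subset_closedBall
      (differentiable_taylorTerm one_pos hG _) (taylorTerm_smul one_pos hG _)
      (h.numericalRange_taylorTerm_subset hε hG hm n) z).trans_eq ?_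
    split_ifs with hn
    · rw [hn]
      push_cast
      ring
    · ring
  have hmajorant := (hasSum_ite_eq 0 (4 * ‖z‖ ^ 2 * ‖G 0‖)).add
    ((hasSum_pow_mul_one_add_mul (norm_nonneg z) (mem_ball_zero_iff.1 hz) (Real.log 2)).mul_left
      (8 * ‖z‖ ^ 2 * (a - m)))
  have htail := (hasSum_nat_add_iff' 2).2 (hasSum_taylorTerm hG hz)
  rw [Finset.sum_range_succ, Finset.sum_range_one, taylorTerm_zero,
    taylorTerm_one (hG.differentiableAt (ball_mem_nhds 0 one_pos)), ← sub_sub] at htail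
  exact (htail.norm_le_of_bounded hmajorant hterm).trans_eq (by ring)

theorem IsPseudoDissipative.norm_sub_le (h : IsPseudoDissipative G a b ε) (hε : 0 < ε)
    (hG : DifferentiableOn ℂ G (ball 0 1)) {V m : ℝ}
    (hV : numericalRange (fderiv ℂ G 0 - (a : ℂ) • ContinuousLinearMap.id ℂ X) ⊆ closedBall 0 V)
    (hm : ∀ w ∈ numericalRange (fderiv ℂ G 0), m ≤ w.re) {z : X} (hz : z ∈ ball 0 1) :
    ‖G z - G 0‖ ≤ ‖z‖ * (|a| + Real.exp 1 * V) + 4 * ‖z‖ ^ 2 * ‖G 0‖ +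
      8 * ‖z‖ ^ 2 * ((1 - ‖z‖ * Real.log 2) / (1 - ‖z‖) ^ 2) * (a - m) := by
  have hlinear : ‖fderiv ℂ G 0 z‖ ≤ ‖z‖ * (|a| + Real.exp 1 * V) := by
    calc ‖fderiv ℂ G 0 z‖
        = ‖(fderiv ℂ G 0 - (a : ℂ) • ContinuousLinearMap.id ℂ X) z + (a : ℂ) • z‖ := by simp
      _ ≤ Real.exp 1 * V * ‖z‖ + |a| * ‖z‖ := by
          refine norm_add_le_of_le
            (norm_clm_apply_le_of_numericalRange_subset_closedBall hV z) ?_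
          rw [norm_smul, norm_real, Real.norm_eq_abs]
      _ = ‖z‖ * (|a| + Real.exp 1 * V) := by ring
  have hrest := h.norm_sub_sub_fderiv_le hε hG hm hz
  linarith [norm_sub_norm_le (G z - G 0) (fderiv ℂ G 0 z)]

end Growth

theorem exists_forall_norm_le_of_norm_sub_le {E F : Type*} [SeminormedAddCommGroup E]
    [SeminormedAddCommGroup F] {f : E → F} {bound : ℝ → ℝ} (hb : ContinuousOn bound (Ico 0 1))
    (hf : ∀ z ∈ ball 0 1, ‖f z - f 0‖ ≤ bound ‖z‖) {r : ℝ} (hr : r < 1) :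
    ∃ M, ∀ z, ‖z‖ ≤ r → ‖f z‖ ≤ M := by
  obtain ⟨M, hM⟩ := isCompact_Icc.bddAbove_image (hb.mono (Icc_subset_Ico_right hr))
  refine ⟨M + ‖f 0‖, fun z hz ↦ ?_⟩
  have hMz : bound ‖z‖ ≤ M := hM (mem_image_of_mem bound ⟨norm_nonneg z, hz⟩)
  linarith [norm_sub_norm_le (f z) (f 0), hf z (mem_ball_zero_iff.2 (hz.trans_lt hr))]

theorem continuousOn_growth_majorant (c₁ c₂ c₃ : ℝ) :
    ContinuousOn (fun t : ℝ ↦ t * c₁ + 4 * t ^ 2 * c₂ +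
      8 * t ^ 2 * ((1 - t * Real.log 2) / (1 - t) ^ 2) * c₃) (Ico 0 1) := by
  have hne : ∀ t ∈ Ico (0 : ℝ) 1, (1 - t) ^ 2 ≠ 0 := fun t ht ↦
    pow_ne_zero 2 (sub_ne_zero.2 ht.2.ne')
  fun_prop (disch := assumption)

theorem stmt16 {X : Type*} [NormedAddCommGroup X] [NormedSpace ℂ X] [CompleteSpace X]
    (F : X → X) (hF : DifferentiableOn ℂ F (ball 0 1))
    (θ a b ε : ℝ) (hε : 0 < ε)
    (hpd : ∀ z : X, 1 - ε < ‖z‖ → ‖z‖ < 1 → ∀ zs : X →L[ℂ] ℂ,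
      zs z = (‖z‖ ^ 2 : ℂ) → ‖zs‖ = ‖z‖ →
      (Complex.exp (θ * Complex.I) * zs (F z)).re ≤ a * ‖z‖ ^ 2 + b * (1 - ‖z‖ ^ 2)) :
    (∀ r : ℝ, 0 < r → r < 1 → ∃ M : ℝ, ∀ z : X, ‖z‖ ≤ r → ‖F z‖ ≤ M) ∧
    ∀ z ∈ ball (0:X) 1,
      ‖F z - F 0‖ ≤
        ‖z‖ * (|a| + Real.exp 1 *
          sSup {x : ℝ | ∃ (v : X) (vs : X →L[ℂ] ℂ), ‖v‖ = 1 ∧ vs v = 1 ∧ ‖vs‖ = 1 ∧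
            x = ‖Complex.exp (θ * Complex.I) * vs (fderiv ℂ F 0 v) - (a : ℂ) * vs v‖})
        + 4 * ‖z‖ ^ 2 * ‖F 0‖
        + 8 * ‖z‖ ^ 2 * ((1 - ‖z‖ * Real.log 2) / (1 - ‖z‖) ^ 2) *
          (a - sInf {x : ℝ | ∃ (v : X) (vs : X →L[ℂ] ℂ), ‖v‖ = 1 ∧ vs v = 1 ∧ ‖vs‖ = 1 ∧
            x = (Complex.exp (θ * Complex.I) * vs (fderiv ℂ F 0 v)).re}) := by
  set ω := Complex.exp (θ * Complex.I)
  have hω : ‖ω‖ = 1 := norm_exp_ofReal_mul_I θ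
  have hF0 : DifferentiableAt ℂ F 0 := hF.differentiableAt (ball_mem_nhds 0 one_pos)
  have hpdω : IsPseudoDissipative (ω • F) a b ε := by simpa [IsPseudoDissipative] using hpd
  have hfderiv : fderiv ℂ (ω • F) 0 = ω • fderiv ℂ F 0 := fderiv_const_smul hF0 ω
  have hgrowth := fun z (hz : z ∈ ball (0 : X) 1) ↦ hpdω.norm_sub_le hε (hF.const_smul ω)
    (numericalRange_subset_closedBall_sSup _) (fun w ↦ sInf_re_numericalRange_le _) hz
  simp only [hfderiv, image_numericalRange, Pi.smul_apply, sub_apply,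
    smul_apply, ContinuousLinearMap.id_apply, map_sub, map_smul, smul_eq_mul,
    ← smul_sub, norm_smul, hω, one_mul] at hgrowth
  exact ⟨fun r _ hr ↦
    exists_forall_norm_le_of_norm_sub_le (continuousOn_growth_majorant _ _ _) hgrowth hr, hgrowth⟩
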